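/- Let A ∈ 𝓡 be a fixed set, X a random vector in [0,∞)^d whose distribution F belongs to MRV(α, V, μ) with α ∈ (0,∞) and μ(A) > 0, and Θ a nonnegative random variable not degenerate at 0. Suppose the pair (X, Θ) satisfies Assumption CD_A (with function h) and Assumption B_A, and E[Θ^p h(Θ)] < ∞ for some p > α. Then P[ΘX ∈ xA] ~ E[Θ^α h(Θ)]·P[X ∈ xA] as x → ∞, and the distribution G_A of M_A := sup{u > 0 : ΘX ∈ uA} is regularly varying of index −α. -/

import Mathlib

open MeasureTheory ProbabilityTheory Filter Topology
open scoped Pointwise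

namespace Paper

variable {d : ℕ} {Ω : Type*} [MeasurableSpace Ω]

/-- The family `𝓡` of open, increasing sets with convex complement, bounded away from `0`. -/
structure IsRSet (d : ℕ) (A : Set (Fin d → ℝ)) : Prop where
  isOpen : IsOpen A
  increasing : ∀ u ∈ A, ∀ v : Fin d → ℝ, (∀ i, 0 ≤ v i) → u + v ∈ A
  convex_compl : Convex ℝ Aᶜ
  zero_notMem_closure : (0 : Fin d → ℝ) ∉ closure A

/-- `Y_A(z) = sup { u > 0 : z ∈ u A }`. -/
noncomputable def suprA (A : Set (Fin d → ℝ)) (z : Fin d → ℝ) : ℝ :=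
  sSup {u : ℝ | 0 < u ∧ z ∈ u • A}

/-- `F_A`, the distribution of `Y_A = suprA A ∘ X` under `P`. -/
noncomputable def FA (P : Measure Ω) (A : Set (Fin d → ℝ)) (X : Ω → Fin d → ℝ) :
    Measure ℝ :=
  P.map (fun ω => suprA A (X ω))

/-- `F (x A) = P[X ∈ x A]` as a real number. -/
noncomputable def vTail (P : Measure Ω) (A : Set (Fin d → ℝ)) (X : Ω → Fin d → ℝ)
    (x : ℝ) : ℝ :=
  (P {ω | X ω ∈ x • A}).toReal

/-- Tail `ν(x, ∞)` of a measure on `ℝ`, as a real number. -/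
noncomputable def mTail (ν : Measure ℝ) (x : ℝ) : ℝ := (ν (Set.Ioi x)).toReal

/-- Convolution of two measures on `ℝ`. -/
noncomputable def mConv (μ ν : Measure ℝ) : Measure ℝ :=
  (μ.prod ν).map (fun p => p.1 + p.2)

/-- `n`-fold convolution power. -/
noncomputable def mConvN (ν : Measure ℝ) : ℕ → Measure ℝ
  | 0 => Measure.dirac 0
  | n + 1 => mConv (mConvN ν n) ν

/-- Long-tailed class `𝓛`. -/
def MemL (ν : Measure ℝ) : Prop :=
  ∀ a : ℝ, 0 < a → Tendsto (fun x => mTail ν (x - a) / mTail ν x) atTop (𝓝 1)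

/-- Subexponential class `𝓢`. -/
def MemS (ν : Measure ℝ) : Prop :=
  Tendsto (fun x => mTail (mConv ν ν) x / mTail ν x) atTop (𝓝 2)

/-- Dominatedly varying class `𝓓`. -/
def MemD (ν : Measure ℝ) : Prop :=
  ∀ y : ℝ, 0 < y → y < 1 → ∃ C : ℝ, ∀ᶠ x in atTop, mTail ν (y * x) / mTail ν x ≤ C

/-- Positively decreasing class `𝓟𝓓`. -/
def MemPD (ν : Measure ℝ) : Prop :=
  ∀ b : ℝ, 1 < b → ∃ c : ℝ, c < 1 ∧ ∀ᶠ x in atTop, mTail ν (b * x) / mTail ν x ≤ c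

/-- Consistently varying class `𝓒`. -/
def MemC (ν : Measure ℝ) : Prop :=
  Tendsto (fun b : ℝ => Filter.liminf (fun x => mTail ν (b * x) / mTail ν x) atTop)
    (nhdsWithin 1 (Set.Ioi 1)) (𝓝 1)

/-- `𝓐 = 𝓢 ∩ 𝓟𝓓`. -/
def MemA (ν : Measure ℝ) : Prop := MemS ν ∧ MemPD ν

/-- `𝓣 = 𝓛 ∩ 𝓟𝓓`. -/
def MemT (ν : Measure ℝ) : Prop := MemL ν ∧ MemPD ν

/-- Regular variation of index `-α` of the tail of `ν`. -/
def MemRV (ν : Measure ℝ) (α : ℝ) : Prop :=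
  ∀ t : ℝ, 0 < t → Tendsto (fun x => mTail ν (t * x) / mTail ν x) atTop (𝓝 (t ^ (-α)))

/-- Weak tail-equivalence `f ≍ g`. -/
def WeakTailEquiv (f g : ℝ → ℝ) : Prop :=
  ∃ c₁ c₂ : ℝ, 0 < c₁ ∧ ∀ᶠ x in atTop, c₁ * g x ≤ f x ∧ f x ≤ c₂ * g x

/-- (Standard) multivariate regular variation `F ∈ MRV(α, V, μ)` of the distribution of `X`. -/
structure IsMRV (P : Measure Ω) (X : Ω → Fin d → ℝ) (α : ℝ) (V : Measure ℝ)
    (μ : Measure (Fin d → ℝ)) : Prop where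
  alpha_pos : 0 < α
  V_prob : IsProbabilityMeasure V
  V_rv : MemRV V α
  mu_ne_zero : ∃ B : Set (Fin d → ℝ), (0 : Fin d → ℝ) ∉ closure B ∧ 0 < μ B
  mu_radon : ∀ B : Set (Fin d → ℝ), (0 : Fin d → ℝ) ∉ closure B → μ B ≠ ⊤
  tendsto : ∀ B : Set (Fin d → ℝ), MeasurableSet B → (0 : Fin d → ℝ) ∉ closure B →
    μ (frontier B) = 0 →
    Tendsto (fun x => vTail P B X x / mTail V x) atTop (𝓝 ((μ B).toReal))

/-- Support of a distribution on `ℝ`. -/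
def measSupport (ν : Measure ℝ) : Set ℝ := {t | ∀ U ∈ 𝓝 t, 0 < ν U}

/-- Assumption `CD_A`: conditional dependence of `(X, Θ)` on `A` with transfer function `h`:
`P[Y_A > x | Θ = t] ~ h(t) P[Y_A > x]` uniformly on the support of the distribution of `Θ`. -/
def CDA (P : Measure Ω) [IsFiniteMeasure P] (A : Set (Fin d → ℝ))
    (X : Ω → Fin d → ℝ) (Θ : Ω → ℝ) (h : ℝ → ℝ) : Prop :=
  ∀ ε : ℝ, 0 < ε → ∀ᶠ x in atTop, ∀ t ∈ measSupport (P.map Θ),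
    |((condDistrib (fun ω => suprA A (X ω)) Θ P) t (Set.Ioi x)).toReal /
        (h t * (P {ω | x < suprA A (X ω)}).toReal) - 1| ≤ ε

/-- Assumption `B_A`: `P[Θ > c x] = o(P[Θ Y_A > x])` for all `c > 0`. -/
def BA (P : Measure Ω) (A : Set (Fin d → ℝ)) (X : Ω → Fin d → ℝ) (Θ : Ω → ℝ) : Prop :=
  ∀ c : ℝ, 0 < c →
    Tendsto (fun x => (P {ω | c * x < Θ ω}).toReal /
      (P {ω | x < Θ ω * suprA A (X ω)}).toReal) atTop (𝓝 0)

/-- Assumption `B_A` in the form `P[Θ > c x] = o(P[Θ X ∈ x A])` for all `c > 0`. -/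
def BA' (P : Measure Ω) (A : Set (Fin d → ℝ)) (X : Ω → Fin d → ℝ) (Θ : Ω → ℝ) : Prop :=
  ∀ c : ℝ, 0 < c →
    Tendsto (fun x => (P {ω | c * x < Θ ω}).toReal /
      (P {ω | Θ ω • X ω ∈ x • A}).toReal) atTop (𝓝 0)

/-! Since `A` is radially increasing, `Y_A` is positively homogeneous and `{Y_A > x} = {X ∈ xA}`, so
the theorem is Breiman's lemma for the product `Θ Y_A`. The tail of `Y_A` is regularly varying
because all but countably many dilates `cA` have a `μ`-null frontier: the frontiers are the level
sets of the gauge of `Aᶜ`. For the product, condition on `Θ`. On `0 < Θ ≤ x / D` we have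
`P[Y_A > x / t | Θ = t] / P[Y_A > x] → t ^ α * h t`, and the uniformity in `CD_A` together with
Potter's bound dominates this ratio by a multiple of `1 + t ^ p * h t`, so dominated convergence
applies. Assumption `B_A` makes the range `Θ > x / D` negligible. -/

section RadialSets

lemma smul_subset_smul_of_starConvex_compl {E : Type*} [AddCommGroup E] [Module ℝ E] {A : Set E}
    (hA : StarConvex ℝ 0 Aᶜ) {u v : ℝ} (hu : 0 < u) (huv : u ≤ v) : v • A ⊆ u • A := by
  intro z hz
  have hv : 0 < v := hu.trans_le huv
  rw [Set.mem_smul_set_iff_inv_smul_mem₀ hv.ne'] at hz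
  rw [Set.mem_smul_set_iff_inv_smul_mem₀ hu.ne']
  by_contra hzu
  have hmem := starConvex_zero_iff.1 hA hzu (by positivity : 0 ≤ u / v) ((div_le_one hv).2 huv)
  rw [smul_smul, div_mul_eq_mul_div, mul_inv_cancel₀ hu.ne', one_div] at hmem
  exact hmem hz

lemma exists_pos_forall_le_norm {E : Type*} [SeminormedAddCommGroup E] {A : Set E}
    (hA : (0 : E) ∉ closure A) : ∃ r > 0, ∀ a ∈ A, r ≤ ‖a‖ := by
  simpa only [Metric.mem_closure_iff, dist_zero_left, not_forall, not_exists, not_and, not_lt,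
    exists_prop] using hA

variable {A : Set (Fin d → ℝ)}

lemma bddAbove_setOf_mem_smul (hA : 0 ∉ closure A) (z : Fin d → ℝ) :
    BddAbove {u : ℝ | 0 < u ∧ z ∈ u • A} := by
  obtain ⟨r, hr, hrA⟩ := exists_pos_forall_le_norm hA
  refine ⟨‖z‖ / r, ?_⟩
  rintro u ⟨hu, a, ha, rfl⟩
  rw [le_div_iff₀ hr, norm_smul, Real.norm_of_nonneg hu.le]
  gcongr
  exact hrA a ha

lemma suprA_nonneg (z : Fin d → ℝ) : 0 ≤ suprA A z :=
  Real.sSup_nonneg fun _ hu => hu.1.le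

lemma lt_suprA_iff_exists_mem_smul (hA : 0 ∉ closure A) {x : ℝ} (hx : 0 ≤ x) (z : Fin d → ℝ) :
    x < suprA A z ↔ ∃ u > x, z ∈ u • A := by
  constructor
  · intro hxz
    have hne : {u : ℝ | 0 < u ∧ z ∈ u • A}.Nonempty := by
      by_contra hempty
      rw [suprA, Set.not_nonempty_iff_eq_empty.1 hempty, Real.sSup_empty] at hxz
      exact hx.not_gt hxz
    obtain ⟨u, ⟨-, hzu⟩, hxu⟩ := exists_lt_of_lt_csSup hne hxz
    exact ⟨u, hxu, hzu⟩
  · rintro ⟨u, hxu, hzu⟩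
    exact hxu.trans_le (le_csSup (bddAbove_setOf_mem_smul hA z) ⟨hx.trans_lt hxu, hzu⟩)

lemma lowerSemicontinuous_suprA (hAo : IsOpen A) (hA : 0 ∉ closure A) :
    LowerSemicontinuous (suprA A) := by
  refine lowerSemicontinuous_iff_isOpen_preimage.2 fun x => ?_
  rcases lt_or_ge x 0 with hx | hx
  · have hpre : suprA A ⁻¹' Set.Ioi x = Set.univ :=
      Set.eq_univ_of_forall fun z => hx.trans_le (suprA_nonneg z)
    rw [hpre]
    exact isOpen_univ
  · have hpre : suprA A ⁻¹' Set.Ioi x = ⋃ u ∈ Set.Ioi x, u • A := by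
      ext z
      simpa only [Set.mem_preimage, Set.mem_Ioi, Set.mem_iUnion, exists_prop] using
        lt_suprA_iff_exists_mem_smul hA hx z
    rw [hpre]
    exact isOpen_biUnion fun u hu => hAo.smul₀ (hx.trans_lt hu).ne'

lemma lt_suprA_iff_mem_smul (hAo : IsOpen A) (hAs : StarConvex ℝ 0 Aᶜ) (hA : 0 ∉ closure A)
    {x : ℝ} (hx : 0 < x) (z : Fin d → ℝ) : x < suprA A z ↔ z ∈ x • A := by
  rw [lt_suprA_iff_exists_mem_smul hA hx.le]
  constructor
  · rintro ⟨u, hxu, hzu⟩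
    exact smul_subset_smul_of_starConvex_compl hAs hx hxu.le hzu
  · intro hz
    rw [Set.mem_smul_set_iff_inv_smul_mem₀ hx.ne'] at hz
    have hcont : ContinuousAt (fun u : ℝ => u⁻¹ • z) x :=
      (continuousAt_inv₀ hx.ne').smul continuousAt_const
    have hnear : ∀ᶠ u in 𝓝[>] x, u⁻¹ • z ∈ A :=
      (hcont.eventually (hAo.mem_nhds hz)).filter_mono nhdsWithin_le_nhds
    obtain ⟨u, huA, hxu⟩ := (hnear.and self_mem_nhdsWithin).exists
    exact ⟨u, hxu, (Set.mem_smul_set_iff_inv_smul_mem₀ (hx.trans hxu).ne' _ _).2 huA⟩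

lemma suprA_smul (hA : 0 ∉ A) {t : ℝ} (ht : 0 ≤ t) (z : Fin d → ℝ) :
    suprA A (t • z) = t * suprA A z := by
  rcases ht.eq_or_lt with rfl | ht
  · have hempty : {u : ℝ | 0 < u ∧ (0 : ℝ) • z ∈ u • A} = ∅ := by
      refine Set.eq_empty_of_forall_notMem fun u ⟨hu, hmem⟩ => hA ?_
      rwa [zero_smul, Set.mem_smul_set_iff_inv_smul_mem₀ hu.ne', smul_zero] at hmem
    rw [suprA, hempty, Real.sSup_empty, zero_mul]
  · have hscale : {u : ℝ | 0 < u ∧ t • z ∈ u • A} = t • {u : ℝ | 0 < u ∧ z ∈ u • A} := by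
      ext u
      rw [Set.mem_smul_set_iff_inv_smul_mem₀ ht.ne', smul_eq_mul]
      refine and_congr (by simp [ht]) ?_
      rw [mul_smul, Set.mem_smul_set_iff_inv_smul_mem₀ (inv_ne_zero ht.ne'), inv_inv]
    rw [suprA, hscale, Real.sSup_smul_of_nonneg ht.le, smul_eq_mul, suprA]

lemma smul_mem_smul_iff_lt_mul_suprA (hAo : IsOpen A) (hAs : StarConvex ℝ 0 Aᶜ)
    (hA : 0 ∉ closure A) {t x : ℝ} (ht : 0 ≤ t) (hx : 0 < x) {z : Fin d → ℝ} :
    t • z ∈ x • A ↔ x < t * suprA A z := by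
  rw [← lt_suprA_iff_mem_smul hAo hAs hA hx, suprA_smul (fun h0 => hA (subset_closure h0)) ht]

end RadialSets

section NullFrontier

variable {E : Type*} [AddCommGroup E] [Module ℝ E] [TopologicalSpace E]
  [IsTopologicalAddGroup E] [ContinuousSMul ℝ E] {C : Set E}

lemma frontier_smul_eq_setOf_gauge_eq (hC : Convex ℝ C) (hC0 : C ∈ 𝓝 0) {c : ℝ} (hc : 0 < c) :
    frontier (c • C) = {z | gauge C z = c} := by
  ext z
  have hcC0 : c • C ∈ 𝓝 0 := (set_smul_mem_nhds_zero_iff hc.ne').2 hC0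
  rw [← gauge_eq_one_iff_mem_frontier (hC.smul c) hcC0, gauge_smul_left_of_nonneg hc.le,
    Pi.smul_apply, smul_eq_mul, inv_mul_eq_one₀ hc.ne', eq_comm]
  rfl

lemma exists_measure_frontier_smul_eq_zero [MeasurableSpace E] [OpensMeasurableSpace E]
    (hC : Convex ℝ C) (hC0 : C ∈ 𝓝 0) {a b : ℝ} (ha : 0 ≤ a) (hab : a < b) {μ : Measure E}
    (hμ : μ {z | a < gauge C z} ≠ ⊤) : ∃ c ∈ Set.Ioo a b, μ (frontier (c • C)) = 0 := by
  have hgauge : Measurable (gauge C) := (continuous_gauge hC hC0).measurable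
  have : Fact (μ {z | a < gauge C z} < ⊤) := ⟨hμ.lt_top⟩
  have hcount := Measure.countable_meas_level_set_pos (μ := μ.restrict {z | a < gauge C z}) hgauge
  obtain ⟨c, hc, hcab⟩ := (hcount.dense_compl ℝ).exists_between hab
  refine ⟨c, hcab, ?_⟩
  have hlevel : {z | gauge C z = c} ⊆ {z | a < gauge C z} := fun z hz => hcab.1.trans_eq hz.symm
  rw [frontier_smul_eq_setOf_gauge_eq hC hC0 (ha.trans_lt hcab.1),
    ← Measure.restrict_eq_self μ hlevel]
  simpa using hc

end NullFrontier

section RegularVariation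

variable {ν : Measure ℝ} {α p : ℝ}

lemma mTail_map {P : Measure Ω} {f : Ω → ℝ} (hf : Measurable f) (x : ℝ) :
    mTail (P.map f) x = (P {ω | x < f ω}).toReal := by
  rw [mTail, Measure.map_apply hf measurableSet_Ioi]
  rfl

lemma mTail_nonneg (ν : Measure ℝ) (x : ℝ) : 0 ≤ mTail ν x := ENNReal.toReal_nonneg

lemma antitone_mTail [IsFiniteMeasure ν] : Antitone (mTail ν) := fun _ _ hxy =>
  measureReal_mono (Set.Ioi_subset_Ioi hxy)

lemma MemRV.eventually_ne_zero (hν : MemRV ν α) : ∀ᶠ x in atTop, mTail ν x ≠ 0 := by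
  have hlim := hν 1 one_pos
  rw [Real.one_rpow] at hlim
  filter_upwards [hlim.eventually_ne one_ne_zero] with x hx
  exact (div_ne_zero_iff.1 hx).2

lemma MemRV.mTail_pos [IsFiniteMeasure ν] (hν : MemRV ν α) (x : ℝ) : 0 < mTail ν x := by
  obtain ⟨y, hy, hxy⟩ := (hν.eventually_ne_zero.and (eventually_ge_atTop x)).exists
  exact ((mTail_nonneg ν y).lt_of_ne' hy).trans_le (antitone_mTail hxy)

lemma MemRV.of_tendsto_div {ρ : Measure ℝ} {K : ℝ} (hν : MemRV ν α) (hK : K ≠ 0)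
    (hρν : Tendsto (fun x => mTail ρ x / mTail ν x) atTop (𝓝 K)) : MemRV ρ α := by
  intro t ht
  have htx : Tendsto (fun x : ℝ => t * x) atTop atTop := tendsto_id.const_mul_atTop ht
  have hlim := ((hρν.comp htx).mul (hν t ht)).mul (hρν.inv₀ hK)
  rw [mul_right_comm, mul_inv_cancel₀ hK, one_mul] at hlim
  refine hlim.congr' ?_
  filter_upwards [hν.eventually_ne_zero, htx.eventually hν.eventually_ne_zero] with x hx htx
  simp only [Function.comp_apply]
  field_simp

lemma le_pow_mul_of_le_mul_two_mul {T : ℝ → ℝ} {C D : ℝ} (hC : 0 ≤ C) (hD : 0 ≤ D)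
    (hT : ∀ y ≥ D, T y ≤ C * T (2 * y)) (n : ℕ) : ∀ y ≥ D, T y ≤ C ^ n * T (2 ^ n * y) := by
  induction n with
  | zero => simp
  | succ n ih =>
    intro y hy
    have hDy : D ≤ 2 ^ n * y :=
      hy.trans (le_mul_of_one_le_left (hD.trans hy) (one_le_pow₀ one_le_two))
    calc T y ≤ C ^ n * T (2 ^ n * y) := ih y hy
      _ ≤ C ^ n * (C * T (2 * (2 ^ n * y))) := by gcongr; exact hT _ hDy
      _ = C ^ (n + 1) * T (2 ^ (n + 1) * y) := by ring_nf

lemma MemRV.exists_mTail_le_two_rpow_mul [IsFiniteMeasure ν] (hν : MemRV ν α) (hp : α < p) :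
    ∃ D > 0, ∀ y ≥ D, mTail ν y ≤ 2 ^ p * mTail ν (2 * y) := by
  have hlt : (2 : ℝ) ^ (-p) < 2 ^ (-α) :=
    Real.rpow_lt_rpow_of_exponent_lt one_lt_two (neg_lt_neg hp)
  have hev := ((hν 2 two_pos).eventually_const_lt hlt).and (eventually_gt_atTop 0)
  obtain ⟨D, hD⟩ := eventually_atTop.1 hev
  refine ⟨D, (hD D le_rfl).2, fun y hy => ?_⟩
  have hratio := (hD y hy).1
  rw [lt_div_iff₀ (hν.mTail_pos y), Real.rpow_neg zero_le_two, inv_mul_lt_iff₀ (by positivity)]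
    at hratio
  exact hratio.le

lemma MemRV.exists_potter_bound [IsFiniteMeasure ν] (hν : MemRV ν α) (hp : α < p) (hp0 : 0 ≤ p) :
    ∃ D > 0, ∀ y ≥ D, ∀ t ≥ 1, mTail ν y ≤ 2 ^ p * t ^ p * mTail ν (t * y) := by
  obtain ⟨D, hD, hdouble⟩ := hν.exists_mTail_le_two_rpow_mul hp
  refine ⟨D, hD, fun y hy t ht => ?_⟩
  have hy0 : 0 < y := hD.trans_le hy
  obtain ⟨n, hnt, htn⟩ := exists_nat_pow_near ht one_lt_two
  calc mTail ν y ≤ (2 ^ p) ^ (n + 1) * mTail ν (2 ^ (n + 1) * y) :=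
        le_pow_mul_of_le_mul_two_mul (by positivity) hD.le hdouble (n + 1) y hy
    _ = 2 ^ p * (2 ^ n) ^ p * mTail ν (2 ^ (n + 1) * y) := by
        rw [pow_succ', Real.rpow_pow_comm zero_le_two]
    _ ≤ 2 ^ p * t ^ p * mTail ν (t * y) := by
        have hmono : mTail ν (2 ^ (n + 1) * y) ≤ mTail ν (t * y) := antitone_mTail (by gcongr)
        gcongr
        exact mTail_nonneg _ _

end RegularVariation

/-- The univariate form of `CD_A`: the tail of `κ t` is asymptotically `h t` times the tail of `ν`,
uniformly for `t ∈ s`. -/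
def UniformTailEquiv (κ : Kernel ℝ ℝ) (ν : Measure ℝ) (h : ℝ → ℝ) (s : Set ℝ) : Prop :=
  TendstoUniformlyOn (fun x t => mTail (κ t) x / (h t * mTail ν x)) 1 atTop s

section UniformTailEquiv

variable {κ : Kernel ℝ ℝ} {ν : Measure ℝ} {h : ℝ → ℝ} {s : Set ℝ} {α p : ℝ}

lemma UniformTailEquiv.exists_two_mul_bounds (hκ : UniformTailEquiv κ ν h s)
    (hh : ∀ t, 0 < h t) (hν : ∀ x, 0 < mTail ν x) :
    ∃ D, ∀ x ≥ D, ∀ t ∈ s,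
      h t * mTail ν x ≤ 2 * mTail (κ t) x ∧ mTail (κ t) x ≤ 2 * (h t * mTail ν x) := by
  obtain ⟨D, hD⟩ := eventually_atTop.1 (Metric.tendstoUniformlyOn_iff.1 hκ (1 / 2) (by norm_num))
  refine ⟨D, fun x hx t ht => ?_⟩
  have hpos : 0 < h t * mTail ν x := mul_pos (hh t) (hν x)
  obtain ⟨hlower, hupper⟩ := abs_lt.1 (hD x hx t ht)
  rw [Pi.one_apply] at hlower hupper
  have hlower' : mTail (κ t) x / (h t * mTail ν x) ≤ 2 := by linarith
  have hupper' : 1 / 2 ≤ mTail (κ t) x / (h t * mTail ν x) := by linarith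
  rw [div_le_iff₀ hpos] at hlower'
  rw [le_div_iff₀ hpos] at hupper'
  exact ⟨by linarith, hlower'⟩

lemma UniformTailEquiv.exists_forall_le [IsMarkovKernel κ] (hκ : UniformTailEquiv κ ν h s)
    (hh : ∀ t, 0 < h t) (hν : ∀ x, 0 < mTail ν x) : ∃ C > 0, ∀ t ∈ s, h t ≤ C := by
  obtain ⟨D, hD⟩ := hκ.exists_two_mul_bounds hh hν
  refine ⟨2 / mTail ν D, div_pos two_pos (hν D), fun t ht => ?_⟩
  have hone : mTail (κ t) D ≤ 1 := measureReal_le_one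
  rw [le_div_iff₀ (hν D)]
  linarith [(hD D le_rfl t ht).1]

lemma UniformTailEquiv.exists_mTail_div_le [IsMarkovKernel κ] [IsFiniteMeasure ν]
    (hκ : UniformTailEquiv κ ν h s) (hh : ∀ t, 0 < h t) (hν : MemRV ν α) (hp : α < p)
    (hp0 : 0 ≤ p) :
    ∃ D > 0, ∃ C > 0, ∀ t ∈ s, 0 < t → ∀ x, D ≤ x / t →
      mTail (κ t) (x / t) / mTail ν x ≤ C * (1 + t ^ p * h t) := by
  obtain ⟨D₁, hD₁, hpotter⟩ := hν.exists_potter_bound hp hp0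
  obtain ⟨D₂, hbounds⟩ := hκ.exists_two_mul_bounds hh hν.mTail_pos
  obtain ⟨K, hK, hhK⟩ := hκ.exists_forall_le hh hν.mTail_pos
  refine ⟨max D₁ D₂, lt_max_of_lt_left hD₁, 2 * (K + 2 ^ p), by positivity,
    fun t hts ht x hx => ?_⟩
  have hTx : 0 < mTail ν x := hν.mTail_pos x
  have hht : 0 < h t := hh t
  have hmoment : 0 ≤ t ^ p * h t := by positivity
  have h2p : (0 : ℝ) < 2 ^ p := by positivity
  have hx0 : 0 < x := (div_pos_iff_of_pos_right ht).1 (hD₁.trans_le ((le_max_left _ _).trans hx))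
  rw [div_le_iff₀ hTx]
  refine (hbounds _ ((le_max_right _ _).trans hx) t hts).2.trans ?_
  suffices hmain : h t * mTail ν (x / t) ≤ (K + 2 ^ p) * (1 + t ^ p * h t) * mTail ν x by linarith
  rcases le_total t 1 with ht1 | ht1
  · calc h t * mTail ν (x / t) ≤ K * mTail ν x :=
          mul_le_mul (hhK t hts) (antitone_mTail (le_div_self hx0.le ht ht1))
            (mTail_nonneg _ _) hK.le
      _ ≤ (K + 2 ^ p) * (1 + t ^ p * h t) * mTail ν x := by gcongr; nlinarith
  · have htx := hpotter _ ((le_max_left _ _).trans hx) t ht1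
    rw [mul_div_cancel₀ _ ht.ne'] at htx
    calc h t * mTail ν (x / t) ≤ h t * (2 ^ p * t ^ p * mTail ν x) := by gcongr
      _ = 2 ^ p * (t ^ p * h t) * mTail ν x := by ring
      _ ≤ (K + 2 ^ p) * (1 + t ^ p * h t) * mTail ν x := by gcongr <;> linarith

lemma UniformTailEquiv.tendsto_mTail_div [IsFiniteMeasure ν] (hκ : UniformTailEquiv κ ν h s)
    (hν : MemRV ν α) {t : ℝ} (hts : t ∈ s) (ht : 0 < t) (hht : h t ≠ 0) :
    Tendsto (fun x => mTail (κ t) (x / t) / mTail ν x) atTop (𝓝 (t ^ α * h t)) := by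
  have hxt : Tendsto (fun x : ℝ => x / t) atTop atTop := tendsto_id.atTop_div_const ht
  have hrv := hν t⁻¹ (inv_pos.2 ht)
  rw [Real.inv_rpow ht.le, Real.rpow_neg ht.le, inv_inv] at hrv
  have hlim := (((hκ.tendsto_at hts).comp hxt).mul hrv).mul_const (h t)
  rw [Pi.one_apply, one_mul] at hlim
  refine hlim.congr fun x => ?_
  have hTx := (hν.mTail_pos x).ne'
  have hTxt := (hν.mTail_pos (x / t)).ne'
  rw [Function.comp_apply, ← div_eq_inv_mul]
  field_simp

lemma UniformTailEquiv.integrable_rpow_mul [IsMarkovKernel κ] (hκ : UniformTailEquiv κ ν h s)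
    (hh : ∀ t, 0 < h t) (hhm : Measurable h) (hν : ∀ x, 0 < mTail ν x) (hα : 0 ≤ α) (hp : α ≤ p)
    {ρ : Measure ℝ} [IsFiniteMeasure ρ] (hρs : ∀ᵐ t ∂ρ, t ∈ s) (hρ : ∀ᵐ t ∂ρ, 0 ≤ t)
    (hmom : Integrable (fun t => t ^ p * h t) ρ) : Integrable (fun t => t ^ α * h t) ρ := by
  obtain ⟨K, hK, hhK⟩ := hκ.exists_forall_le hh hν
  refine ((integrable_const K).add hmom).mono' (by fun_prop) ?_
  filter_upwards [hρs, hρ] with t hts ht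
  have hht : 0 < h t := hh t
  have hmoment : 0 ≤ t ^ p * h t := by positivity
  rw [Real.norm_of_nonneg (by positivity), Pi.add_apply]
  rcases le_total t 1 with ht1 | ht1
  · have hle : t ^ α * h t ≤ 1 * h t := by gcongr; exact Real.rpow_le_one ht ht1 hα
    linarith [hhK t hts]
  · have hle : t ^ α * h t ≤ t ^ p * h t := by gcongr
    linarith

lemma measurable_mTail_kernel [IsSFiniteKernel κ] {g : ℝ → ℝ} (hg : Measurable g) :
    Measurable fun t => mTail (κ t) (g t) :=
  (Kernel.measurable_kernel_prodMk_left
    (measurableSet_lt (hg.comp measurable_fst) measurable_snd)).ennreal_toReal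

theorem UniformTailEquiv.exists_tendsto_setIntegral_div [IsMarkovKernel κ] [IsFiniteMeasure ν]
    (hκ : UniformTailEquiv κ ν h s) (hh : ∀ t, 0 < h t) (hν : MemRV ν α) (hα : 0 < α)
    (hp : α < p) {ρ : Measure ℝ} [IsFiniteMeasure ρ] (hρs : ∀ᵐ t ∂ρ, t ∈ s)
    (hρ : ∀ᵐ t ∂ρ, 0 ≤ t) (hmom : Integrable (fun t => t ^ p * h t) ρ) :
    ∃ D > 0, Tendsto
      (fun x => (∫ t in Set.Ioc 0 (x / D), mTail (κ t) (x / t) ∂ρ) / mTail ν x) atTop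
      (𝓝 (∫ t, t ^ α * h t ∂ρ)) := by
  obtain ⟨D, hD, C, hC, hdom⟩ := hκ.exists_mTail_div_le hh hν hp (hα.trans hp).le
  refine ⟨D, hD, ?_⟩
  simp_rw [← integral_div, ← integral_indicator measurableSet_Ioc]
  refine tendsto_integral_filter_of_dominated_convergence (fun t => C * (1 + t ^ p * h t))
    (Eventually.of_forall fun x => ?_) (Eventually.of_forall fun x => ?_)
    (((integrable_const 1).add hmom).const_mul C) ?_
  · exact (((measurable_mTail_kernel (measurable_const.div measurable_id)).div_const _).indicator
      measurableSet_Ioc).aestronglyMeasurable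
  · filter_upwards [hρs, hρ] with t hts ht
    have hht : 0 < h t := hh t
    rw [Real.norm_of_nonneg (Set.indicator_nonneg (fun _ _ =>
      div_nonneg (mTail_nonneg _ _) (mTail_nonneg _ _)) _)]
    refine Set.indicator_apply_le' (fun htx => hdom t hts htx.1 x ?_) fun _ => by positivity
    exact (le_div_comm₀ htx.1 hD).1 htx.2
  · filter_upwards [hρs, hρ] with t hts ht
    rcases ht.eq_or_lt with rfl | ht
    · simp [Real.zero_rpow hα.ne']
    · refine (hκ.tendsto_mTail_div hν hts ht (hh t).ne').congr' ?_
      filter_upwards [eventually_ge_atTop (t * D)] with x hx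
      have htx : t ∈ Set.Ioc 0 (x / D) := ⟨ht, (le_div_iff₀ hD).2 hx⟩
      rw [Set.indicator_of_mem htx]

end UniformTailEquiv

section Product

lemma ae_mem_measSupport (ν : Measure ℝ) : ∀ᵐ t ∂ν, t ∈ measSupport ν := by
  filter_upwards [Measure.support_mem_ae (μ := ν)] with t ht
  exact (Measure.mem_support_iff_forall t).1 ht

lemma ae_map_nonneg {P : Measure Ω} {Θ : Ω → ℝ} (hΘ : Measurable Θ) (hΘ0 : ∀ ω, 0 ≤ Θ ω) :
    ∀ᵐ t ∂(P.map Θ), 0 ≤ t :=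
  (ae_map_iff hΘ.aemeasurable measurableSet_Ici).2 (ae_of_all _ hΘ0)

lemma setIntegral_mTail_condDistrib {P : Measure Ω} [IsFiniteMeasure P] {Y Θ : Ω → ℝ}
    (hY : Measurable Y) (hΘ : Measurable Θ) {s : Set ℝ} (hs : MeasurableSet s) {g : ℝ → ℝ}
    (hg : Measurable g) :
    ∫ t in s, mTail (condDistrib Y Θ P t) (g t) ∂(P.map Θ) =
      (P {ω | Θ ω ∈ s ∧ g (Θ ω) < Y ω}).toReal := by
  let S : Set (ℝ × ℝ) := {q | q.1 ∈ s ∧ g q.1 < q.2}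
  have hS : MeasurableSet S :=
    (measurable_fst hs).inter (measurableSet_lt (hg.comp measurable_fst) measurable_snd)
  have hsection : ∀ t, condDistrib Y Θ P t (Prod.mk t ⁻¹' S) =
      s.indicator (fun t => condDistrib Y Θ P t (Set.Ioi (g t))) t := by
    intro t
    by_cases ht : t ∈ s
    · rw [Set.indicator_of_mem ht]
      congr 1
      ext y
      simp [S, ht]
    · simp [S, ht]
  have hP : P {ω | Θ ω ∈ s ∧ g (Θ ω) < Y ω} =
      ∫⁻ t in s, condDistrib Y Θ P t (Set.Ioi (g t)) ∂(P.map Θ) := by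
    rw [← lintegral_indicator hs, ← lintegral_congr hsection, ← Measure.compProd_apply hS,
      compProd_map_condDistrib hY.aemeasurable, Measure.map_apply (hΘ.prodMk hY) hS]
    rfl
  have hmeas : Measurable fun t => condDistrib Y Θ P t (Set.Ioi (g t)) :=
    Kernel.measurable_kernel_prodMk_left
      (measurableSet_lt (hg.comp measurable_fst) measurable_snd)
  rw [hP, ← integral_toReal hmeas.aemeasurable (ae_of_all _ fun t => measure_lt_top _ _)]
  rfl

open Asymptotics in
lemma tendsto_div_of_le_add {ι : Type*} {l : Filter ι} {N G R T : ι → ℝ} {K : ℝ}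
    (hG : ∀ᶠ x in l, 0 < G x) (hNG : ∀ᶠ x in l, N x ≤ G x) (hGN : ∀ᶠ x in l, G x ≤ N x + R x)
    (hR : Tendsto (fun x => R x / G x) l (𝓝 0)) (hN : Tendsto (fun x => N x / T x) l (𝓝 K)) :
    Tendsto (fun x => G x / T x) l (𝓝 K) := by
  have hRG : R =o[l] G := (isLittleO_iff_tendsto' (hG.mono fun x hx h0 => absurd h0 hx.ne')).2 hR
  have hNR : (N - G) =O[l] R := by
    refine IsBigO.of_bound 1 ?_
    filter_upwards [hNG, hGN] with x hle hadd
    rw [Pi.sub_apply, one_mul, Real.norm_eq_abs, abs_sub_comm, abs_of_nonneg (sub_nonneg.2 hle)]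
    exact (sub_le_iff_le_add'.2 hadd).trans (le_abs_self _)
  have hequiv : N ~[l] G := hNR.trans_isLittleO hRG
  exact (hequiv.div IsEquivalent.refl).tendsto_nhds hN

lemma setOf_lt_mul_and_le {ι : Type*} {Θ Y : ι → ℝ} (hΘ0 : ∀ ω, 0 ≤ Θ ω) {x b : ℝ} (hx : 0 ≤ x) :
    {ω | Θ ω ∈ Set.Ioc 0 b ∧ x / Θ ω < Y ω} = {ω | x < Θ ω * Y ω ∧ Θ ω ≤ b} := by
  ext ω
  constructor
  · rintro ⟨⟨hpos, hle⟩, hlt⟩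
    exact ⟨(div_lt_iff₀' hpos).1 hlt, hle⟩
  · rintro ⟨hlt, hle⟩
    have hpos : 0 < Θ ω := (hΘ0 ω).lt_of_ne' fun h0 => by
      rw [h0, zero_mul] at hlt
      exact hx.not_gt hlt
    exact ⟨⟨hpos, hle⟩, (div_lt_iff₀' hpos).2 hlt⟩

variable {P : Measure Ω} [IsFiniteMeasure P] {Y Θ : Ω → ℝ} {h : ℝ → ℝ} {α p : ℝ}

lemma UniformTailEquiv.exists_tendsto_truncated_div (hY : Measurable Y) (hΘ : Measurable Θ)
    (hΘ0 : ∀ ω, 0 ≤ Θ ω) (hhm : Measurable h) (hh : ∀ t, 0 < h t) (hν : MemRV (P.map Y) α)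
    (hκ : UniformTailEquiv (condDistrib Y Θ P) (P.map Y) h (measSupport (P.map Θ)))
    (hα : 0 < α) (hp : α < p) (hmom : Integrable (fun ω => Θ ω ^ p * h (Θ ω)) P) :
    ∃ D > 0, Tendsto
      (fun x => (P {ω | x < Θ ω * Y ω ∧ Θ ω ≤ x / D}).toReal / mTail (P.map Y) x) atTop
      (𝓝 (∫ ω, Θ ω ^ α * h (Θ ω) ∂P)) := by
  have hmeas (q : ℝ) : Measurable fun t => t ^ q * h t := by fun_prop
  have hmapint : Integrable (fun t => t ^ p * h t) (P.map Θ) :=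
    (integrable_map_measure (hmeas p).aestronglyMeasurable hΘ.aemeasurable).2 hmom
  obtain ⟨D, hD, hlim⟩ :=
    hκ.exists_tendsto_setIntegral_div hh hν hα hp (ae_mem_measSupport _) (ae_map_nonneg hΘ hΘ0)
      hmapint
  rw [integral_map hΘ.aemeasurable (hmeas α).aestronglyMeasurable] at hlim
  refine ⟨D, hD, hlim.congr' ?_⟩
  filter_upwards [eventually_ge_atTop 0] with x hx
  have hdiv : Measurable fun t => x / t := measurable_const.div measurable_id
  rw [setIntegral_mTail_condDistrib hY hΘ measurableSet_Ioc hdiv, setOf_lt_mul_and_le hΘ0 hx]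

theorem UniformTailEquiv.tendsto_measure_lt_mul_div (hY : Measurable Y) (hΘ : Measurable Θ)
    (hΘ0 : ∀ ω, 0 ≤ Θ ω) (hhm : Measurable h) (hh : ∀ t, 0 < h t) (hν : MemRV (P.map Y) α)
    (hκ : UniformTailEquiv (condDistrib Y Θ P) (P.map Y) h (measSupport (P.map Θ)))
    (hα : 0 < α) (hp : α < p) (hmom : Integrable (fun ω => Θ ω ^ p * h (Θ ω)) P)
    (hE : 0 < ∫ ω, Θ ω ^ α * h (Θ ω) ∂P)
    (hB : ∀ c : ℝ, 0 < c → Tendsto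
      (fun x => (P {ω | c * x < Θ ω}).toReal / (P {ω | x < Θ ω * Y ω}).toReal) atTop (𝓝 0)) :
    Tendsto (fun x => (P {ω | x < Θ ω * Y ω}).toReal / mTail (P.map Y) x) atTop
      (𝓝 (∫ ω, Θ ω ^ α * h (Θ ω) ∂P)) := by
  obtain ⟨D, hD, hlim⟩ :=
    hκ.exists_tendsto_truncated_div hY hΘ hΘ0 hhm hh hν hα hp hmom
  have hle (x : ℝ) : (P {ω | x < Θ ω * Y ω ∧ Θ ω ≤ x / D}).toReal ≤
      (P {ω | x < Θ ω * Y ω}).toReal := measureReal_mono fun ω hω => hω.1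
  refine tendsto_div_of_le_add ?_ (Eventually.of_forall hle) (Eventually.of_forall fun x => ?_)
    (hB D⁻¹ (inv_pos.2 hD)) hlim
  · filter_upwards [hlim.eventually_const_lt hE] with x hx
    exact ((div_pos_iff_of_pos_right (hν.mTail_pos x)).1 hx).trans_le (hle x)
  · refine (measureReal_mono fun ω (hω : x < Θ ω * Y ω) => ?_).trans (measureReal_union_le _ _)
    rw [inv_mul_eq_div]
    exact (le_or_gt (Θ ω) (x / D)).imp_left fun hle => ⟨hω, hle⟩

lemma UniformTailEquiv.integral_rpow_mul_pos (hΘ : Measurable Θ) (hΘ0 : ∀ ω, 0 ≤ Θ ω)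
    (hΘnd : 0 < P {ω | 0 < Θ ω}) (hhm : Measurable h) (hh : ∀ t, 0 < h t)
    (hν : ∀ x, 0 < mTail (P.map Y) x)
    (hκ : UniformTailEquiv (condDistrib Y Θ P) (P.map Y) h (measSupport (P.map Θ)))
    (hα : 0 ≤ α) (hp : α ≤ p) (hmom : Integrable (fun ω => Θ ω ^ p * h (Θ ω)) P) :
    0 < ∫ ω, Θ ω ^ α * h (Θ ω) ∂P := by
  have hmapint : Integrable (fun t => t ^ p * h t) (P.map Θ) :=
    (integrable_map_measure (by fun_prop) hΘ.aemeasurable).2 hmom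
  have hint : Integrable (fun ω => Θ ω ^ α * h (Θ ω)) P :=
    (hκ.integrable_rpow_mul hh hhm hν hα hp (ae_mem_measSupport _) (ae_map_nonneg hΘ hΘ0)
      hmapint).comp_measurable hΘ
  have hnonneg : 0 ≤ fun ω => Θ ω ^ α * h (Θ ω) := fun ω =>
    mul_nonneg (Real.rpow_nonneg (hΘ0 ω) α) (hh _).le
  refine (integral_pos_iff_support_of_nonneg hnonneg hint).2
    (hΘnd.trans_le (measure_mono fun ω (hω : 0 < Θ ω) => ?_))
  exact (mul_pos (Real.rpow_pos_of_pos hω α) (hh _)).ne'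

end Product

section MultivariateTails

variable {P : Measure Ω} {A : Set (Fin d → ℝ)} {X : Ω → Fin d → ℝ} {Θ : Ω → ℝ} {α : ℝ}

lemma measurable_suprA_comp (hAo : IsOpen A) (hA : 0 ∉ closure A) (hX : Measurable X) :
    Measurable fun ω => suprA A (X ω) :=
  (lowerSemicontinuous_suprA hAo hA).measurable.comp hX

lemma mTail_FA (hAo : IsOpen A) (hAs : StarConvex ℝ 0 Aᶜ) (hA : 0 ∉ closure A)
    (hX : Measurable X) {x : ℝ} (hx : 0 < x) : mTail (FA P A X) x = vTail P A X x := by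
  rw [FA, mTail_map (measurable_suprA_comp hAo hA hX), vTail]
  simp only [lt_suprA_iff_mem_smul hAo hAs hA hx]

lemma FA_smul (hA : 0 ∉ A) (hΘ0 : ∀ ω, 0 ≤ Θ ω) :
    FA P A (fun ω => Θ ω • X ω) = P.map fun ω => Θ ω * suprA A (X ω) := by
  simp only [FA, suprA_smul hA (hΘ0 _)]

lemma CDA.uniformTailEquiv [IsFiniteMeasure P] {h : ℝ → ℝ} (hCD : CDA P A X Θ h)
    (hY : Measurable fun ω => suprA A (X ω)) :
    UniformTailEquiv (condDistrib (fun ω => suprA A (X ω)) Θ P) (FA P A X) h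
      (measSupport (P.map Θ)) := by
  refine Metric.tendstoUniformlyOn_iff.2 fun ε hε => ?_
  filter_upwards [hCD (ε / 2) (half_pos hε)] with x hx t ht
  rw [FA, mTail_map hY, Pi.one_apply, dist_comm, Real.dist_eq]
  exact (hx t ht).trans_lt (half_lt_self hε)

variable {V : Measure ℝ} {μ : Measure (Fin d → ℝ)}

lemma IsRSet.compl_mem_nhds_zero (hA : IsRSet d A) : Aᶜ ∈ 𝓝 (0 : Fin d → ℝ) :=
  mem_of_superset (isClosed_closure.isOpen_compl.mem_nhds hA.zero_notMem_closure)
    (Set.compl_subset_compl.2 subset_closure)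

lemma IsRSet.starConvex_compl (hA : IsRSet d A) : StarConvex ℝ 0 Aᶜ :=
  hA.convex_compl.starConvex (mem_of_mem_nhds hA.compl_mem_nhds_zero)

lemma IsMRV.measure_lt_gauge_ne_top (hMRV : IsMRV P X α V μ) (hA : IsRSet d A) {a : ℝ}
    (ha : 0 < a) : μ {z | a < gauge Aᶜ z} ≠ ⊤ := by
  refine hMRV.mu_radon _ fun hmem => ?_
  have hcont := continuous_gauge hA.convex_compl hA.compl_mem_nhds_zero
  have hle : a ≤ gauge Aᶜ 0 := closure_lt_subset_le continuous_const hcont hmem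
  rw [gauge_zero] at hle
  exact hle.not_gt ha

lemma IsRSet.zero_notMem_closure_smul (hA : IsRSet d A) {c : ℝ} (hc : c ≠ 0) :
    0 ∉ closure (c • A) := by
  rw [closure_smul₀' hc, Set.mem_smul_set_iff_inv_smul_mem₀ hc, smul_zero]
  exact hA.zero_notMem_closure

lemma IsMRV.exists_null_frontier_smul (hMRV : IsMRV P X α V μ) (hA : IsRSet d A) :
    ∃ c ∈ Set.Ioo (0 : ℝ) 1, μ (frontier (c • A)) = 0 := by
  obtain ⟨c, ⟨hc, hc1⟩, hfrontier⟩ := exists_measure_frontier_smul_eq_zero hA.convex_compl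
    hA.compl_mem_nhds_zero (by norm_num) one_half_lt_one
    (hMRV.measure_lt_gauge_ne_top hA one_half_pos)
  have hc0 : 0 < c := one_half_pos.trans hc
  refine ⟨c, ⟨hc0, hc1⟩, ?_⟩
  have hcompl : c • Aᶜ = (c • A)ᶜ := Set.smul_set_compl (a := Units.mk0 c hc0.ne')
  rwa [hcompl, frontier_compl] at hfrontier

lemma IsMRV.tendsto_vTail_div (hMRV : IsMRV P X α V μ) {c : ℝ} (hc : 0 < c)
    (hAm : MeasurableSet (c • A)) (hA : 0 ∉ closure (c • A))
    (hfrontier : μ (frontier (c • A)) = 0) :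
    Tendsto (fun x => vTail P A X x / mTail V x) atTop (𝓝 ((μ (c • A)).toReal * c⁻¹ ^ (-α))) := by
  have hcx : Tendsto (fun x : ℝ => c⁻¹ * x) atTop atTop :=
    tendsto_id.const_mul_atTop (inv_pos.2 hc)
  have hlim := ((hMRV.tendsto (c • A) hAm hA hfrontier).comp hcx).mul
    (hMRV.V_rv c⁻¹ (inv_pos.2 hc))
  refine hlim.congr' ?_
  filter_upwards [hcx.eventually hMRV.V_rv.eventually_ne_zero] with x hx
  have hscale : vTail P (c • A) X (c⁻¹ * x) = vTail P A X x := by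
    rw [vTail, smul_smul, mul_right_comm, inv_mul_cancel₀ hc.ne', one_mul, vTail]
  rw [Function.comp_apply, hscale, div_mul_div_cancel₀ hx]

lemma IsMRV.memRV_FA (hMRV : IsMRV P X α V μ) (hA : IsRSet d A) (hX : Measurable X)
    (hμA : 0 < μ A) : MemRV (FA P A X) α := by
  obtain ⟨c, ⟨hc, hc1⟩, hfrontier⟩ := hMRV.exists_null_frontier_smul hA
  have hA0 := hA.zero_notMem_closure_smul hc.ne'
  have hlim := hMRV.tendsto_vTail_div hc (hA.isOpen.smul₀ hc.ne').measurableSet hA0 hfrontier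
  have hsub : A ⊆ c • A := by
    simpa only [one_smul] using smul_subset_smul_of_starConvex_compl hA.starConvex_compl hc hc1.le
  have hμcA : 0 < (μ (c • A)).toReal :=
    ENNReal.toReal_pos (hμA.trans_le (measure_mono hsub)).ne' (hMRV.mu_radon _ hA0)
  refine hMRV.V_rv.of_tendsto_div (by positivity) (hlim.congr' ?_)
  filter_upwards [eventually_gt_atTop 0] with x hx
  rw [mTail_FA hA.isOpen hA.starConvex_compl hA.zero_notMem_closure hX hx]

end MultivariateTails

theorem statement10_general (P : Measure Ω) [IsFiniteMeasure P]
    (A : Set (Fin d → ℝ)) (hAo : IsOpen A) (hAs : StarConvex ℝ 0 Aᶜ) (hA : 0 ∉ closure A)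
    (X : Ω → Fin d → ℝ) (hX : Measurable X)
    (α : ℝ) (hα : 0 < α) (hF : MemRV (FA P A X) α)
    (Θ : Ω → ℝ) (hΘ : Measurable Θ) (hΘ0 : ∀ ω, 0 ≤ Θ ω)
    (hΘnd : 0 < P {ω | 0 < Θ ω})
    (h : ℝ → ℝ) (hh : Measurable h) (hhpos : ∀ t, 0 < h t)
    (hCD : CDA P A X Θ h) (hB : BA P A X Θ)
    (p : ℝ) (hp : α < p)
    (hmom : Integrable (fun ω => Θ ω ^ p * h (Θ ω)) P) :
    Tendsto (fun x => (P {ω | Θ ω • X ω ∈ x • A}).toReal /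
        ((∫ ω, Θ ω ^ α * h (Θ ω) ∂P) * vTail P A X x)) atTop (𝓝 1) ∧
      MemRV (FA P A fun ω => Θ ω • X ω) α := by
  have hY := measurable_suprA_comp hAo hA hX
  have hκ := hCD.uniformTailEquiv hY
  have : IsFiniteMeasure (FA P A X) := Measure.isFiniteMeasure_map _ _
  have hE := hκ.integral_rpow_mul_pos hΘ hΘ0 hΘnd hh hhpos hF.mTail_pos hα.le hp.le hmom
  have hlim := hκ.tendsto_measure_lt_mul_div hY hΘ hΘ0 hh hhpos hF hα hp hmom hE hB
  constructor
  · have hone := hlim.div_const (∫ ω, Θ ω ^ α * h (Θ ω) ∂P)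
    rw [div_self hE.ne'] at hone
    refine hone.congr' ?_
    filter_upwards [eventually_gt_atTop 0] with x hx
    simp only [smul_mem_smul_iff_lt_mul_suprA hAo hAs hA (hΘ0 _) hx]
    rw [← mTail_FA hAo hAs hA hX hx, div_div, mul_comm, FA]
  · refine hF.of_tendsto_div hE.ne' (hlim.congr fun x => ?_)
    have hΘY : Measurable fun ω => Θ ω * suprA A (X ω) := hΘ.mul hY
    rw [FA_smul (fun h0 => hA (subset_closure h0)) hΘ0, mTail_map hΘY, FA]

/-- Dependent multivariate Breiman lemma: if `F ∈ MRV(α, V, μ)`,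
`(X, Θ)` satisfies `CD_A` (with function `h`) and `B_A`, and `E[Θ^p h(Θ)] < ∞` for
some `p > α`, then `P[ΘX ∈ xA] ~ E[Θ^α h(Θ)] · P[X ∈ xA]` and `G_A ∈ 𝓡_{-α}`. -/
theorem statement10 (P : Measure Ω) [IsProbabilityMeasure P]
    (A : Set (Fin d → ℝ)) (hA : IsRSet d A)
    (X : Ω → Fin d → ℝ) (hX : Measurable X)
    (α : ℝ) (V : Measure ℝ) (μ : Measure (Fin d → ℝ))
    (hMRV : IsMRV P X α V μ) (hμA : 0 < μ A)
    (Θ : Ω → ℝ) (hΘ : Measurable Θ) (hΘ0 : ∀ ω, 0 ≤ Θ ω)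
    (hΘnd : 0 < P {ω | 0 < Θ ω})
    (h : ℝ → ℝ) (hh : Measurable h) (hhpos : ∀ t, 0 < h t)
    (hCD : CDA P A X Θ h) (hB : BA P A X Θ)
    (p : ℝ) (hp : α < p)
    (hmom : Integrable (fun ω => Θ ω ^ p * h (Θ ω)) P) :
    Tendsto (fun x => (P {ω | Θ ω • X ω ∈ x • A}).toReal /
        ((∫ ω, Θ ω ^ α * h (Θ ω) ∂P) * vTail P A X x)) atTop (𝓝 1) ∧
      MemRV (FA P A fun ω => Θ ω • X ω) α := by
  exact statement10_general P A hA.isOpen hA.starConvex_compl hA.zero_notMem_closure X hX α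
    hMRV.alpha_pos (hMRV.memRV_FA hA hX hμA) Θ hΘ hΘ0 hΘnd h hh hhpos hCD hB p hp hmom

end Paper
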